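/- Let X_1, X_2, … be identically distributed real random variables on a probability space (Ω, ℱ, P) which are extended negatively dependent with some dominating constant K ≥ 1, with E[|X_1|^{2+γ}] < ∞ for some γ > 0, and let σ² = Var(X_1). Set S_n = Σ_{k=1}^n X_k and a_n = √(2n·log log n) (with log x = ln(max(x, e))). Then P( limsup_{n→∞} |S_n − n·E[X_1]|/a_n ≤ σ ) = 1. -/

import Mathlib

open Filter MeasureTheory
open scoped ENNReal NNReal

noncomputable section

/-- Extended negative dependence (classical, on a probability space) with
dominating constant `K`: the joint lower-left and upper-right tails are
dominated by `K` times the product of the marginal tails. -/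
def ENDProb {Ω : Type} [MeasurableSpace Ω] (P : Measure Ω) (K : ℝ)
    (X : ℕ → Ω → ℝ) : Prop :=
  ∀ (n : ℕ) (x : ℕ → ℝ),
    (P (⋂ i ∈ Finset.range n, {ω | X i ω ≤ x i}) ≤
      ENNReal.ofReal K * ∏ i ∈ Finset.range n, P {ω | X i ω ≤ x i}) ∧
    (P (⋂ i ∈ Finset.range n, {ω | x i < X i ω}) ≤
      ENNReal.ofReal K * ∏ i ∈ Finset.range n, P {ω | x i < X i ω})

/-- `log x = ln(x ∨ e)`. -/
def paperLog (x : ℝ) : ℝ := Real.log (max x (Real.exp 1))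

/-- `a_n = √(2 n log log n)` with the above convention for `log`. -/
def lilA (n : ℕ) : ℝ := Real.sqrt (2 * n * paperLog (paperLog n))

/-!
Negative dependence bounds the exponential moments of a sum, up to the factor `K`, by the product
of the individual ones, so sums of the variables truncated above at level `b` satisfy Chernoff
bounds with variance factor close to `σ²` as long as the exponential parameter is `o(1 / b)`. No
maximal inequality is available, so the times `n ∈ [θ ^ k, θ ^ (k + 1)]` are handled by
a union bound over blocks: the initial sum up to `θ ^ k` carries the constant `σ`; the partial sums
from there to the points of a mesh of width `θ ^ k / log² θ ^ k` are only polynomially many in `k`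
and have variance proportional to `θ - 1`; the remainders from the mesh to `n` are of order `θ ^ k`
many, but so short that each has probability `O(θ ^ (-2 k))`. The truncation level
`b = (θ ^ k) ^ β` with `1 / p < β < 1 / 2` is admissible for Chernoff, and by Markov's inequality
at the moment `p > 2` it eventually cuts off nothing. Borel–Cantelli and `θ ↓ 1` give the upper
bound for the sums of `X`; applied to `-X` it gives the lower one.
-/

open ProbabilityTheory Topology

theorem exp_le_one_add_add_sq_mul_exp {x c : ℝ} (hxc : x ≤ c) (hc : 0 ≤ c) :
    Real.exp x ≤ 1 + x + x ^ 2 / 2 * Real.exp c := by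
  rcases eq_or_ne x 0 with rfl | hx
  · simp
  obtain ⟨y, hy, hxy⟩ := taylor_mean_remainder_lagrange_iteratedDeriv (n := 1) hx.symm
    Real.contDiff_exp.contDiffOn
  have hyc : y ≤ c := hy.2.le.trans (max_le hc hxc)
  have htaylor : Real.exp x - (1 + x) = Real.exp y * x ^ 2 / 2 := by
    simpa [taylorWithinEval_succ, iteratedDeriv_eq_iterate, Real.differentiableAt_exp.derivWithin
      (uniqueDiffOn_uIcc hx.symm 0 Set.left_mem_uIcc)] using hxy
  nlinarith [mul_le_mul_of_nonneg_left (Real.exp_le_exp.2 hyc) (sq_nonneg x)]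

/-- Domination, with constant `K`, of the joint upper tails of every finite subfamily by the
product of the marginal upper tails. Extended negative dependence is this condition for both
`X` and `-X`. -/
def UpperEND {Ω ι : Type*} [MeasurableSpace Ω] (P : Measure Ω) (K : ℝ≥0) (X : ι → Ω → ℝ) : Prop :=
  ∀ (s : Finset ι) (x : ι → ℝ), P (⋂ i ∈ s, {ω | x i < X i ω}) ≤ K * ∏ i ∈ s, P {ω | x i < X i ω}

section JointTails

variable {Ω ι : Type*} [MeasurableSpace Ω] {P : Measure Ω}

theorem measure_biInter_iUnion_le (s : Finset ι) {A : ι → ℕ → Set Ω} (hA : ∀ i, Monotone (A i))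
    {C : ℝ≥0∞} (h : ∀ m, P (⋂ i ∈ s, A i m) ≤ C * ∏ i ∈ s, P (A i m)) :
    P (⋂ i ∈ s, ⋃ m, A i m) ≤ C * ∏ i ∈ s, P (⋃ m, A i m) := by
  have hmono : Monotone fun m => ⋂ i ∈ s, A i m := fun m m' hm =>
    Set.iInter₂_mono fun i _ => hA i hm
  have hsub : (⋂ i ∈ s, ⋃ m, A i m) ⊆ ⋃ m, ⋂ i ∈ s, A i m := by
    intro ω hω
    simp only [Set.mem_iInter, Set.mem_iUnion] at hω ⊢
    choose! f hf using hω
    exact ⟨s.sup f, fun i hi => hA i (Finset.le_sup hi) (hf i hi)⟩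
  refine (measure_mono hsub).trans ?_
  rw [hmono.measure_iUnion]
  refine iSup_le fun m => (h m).trans ?_
  gcongr
  exact Set.subset_iUnion (A i) m

theorem measure_biInter_le_of_subset [IsProbabilityMeasure P] {s t : Finset ι} (hst : s ⊆ t)
    {A : ι → ℕ → Set Ω} (hA : ∀ i, Monotone (A i)) {B : ι → Set Ω} {C : ℝ≥0∞}
    (h : ∀ m, P (⋂ i ∈ t, A i m) ≤ C * ∏ i ∈ t, P (A i m))
    (hB : ∀ i ∈ s, ⋃ m, A i m = B i) (huniv : ∀ i ∉ s, ⋃ m, A i m = Set.univ) :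
    P (⋂ i ∈ s, B i) ≤ C * ∏ i ∈ s, P (B i) := by
  have hinter : (⋂ i ∈ s, B i) ⊆ ⋂ i ∈ t, ⋃ m, A i m := by
    intro ω hω
    simp only [Set.mem_iInter] at hω
    refine Set.mem_iInter₂.2 fun i _ => ?_
    by_cases hi : i ∈ s
    · exact hB i hi ▸ hω i hi
    · exact huniv i hi ▸ Set.mem_univ ω
  have hprod : ∏ i ∈ t, P (⋃ m, A i m) = ∏ i ∈ s, P (B i) := by
    rw [← Finset.prod_subset hst fun i _ hi => by rw [huniv i hi, measure_univ]]
    exact Finset.prod_congr rfl fun i hi => by rw [hB i hi]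
  exact hprod ▸ (measure_mono hinter).trans (measure_biInter_iUnion_le t hA h)

theorem lintegral_prod_ofReal_le {Y : ι → Ω → ℝ} {m : ι → ℝ → ℝ≥0∞} (hm : ∀ i, Measurable (m i))
    (s : Finset ι) (hY : ∀ i, AEMeasurable (Y i) P) (hY0 : ∀ i ω, 0 ≤ Y i ω) (C : ℝ≥0∞)
    (h : ∀ t : ι → ℝ, (∀ i, 0 < t i) → P (⋂ i ∈ s, {ω | t i < Y i ω}) ≤ C * ∏ i ∈ s, m i (t i)) :
    ∫⁻ ω, ∏ i ∈ s, ENNReal.ofReal (Y i ω) ∂P ≤ C * ∏ i ∈ s, ∫⁻ t in Set.Ioi 0, m i t := by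
  classical
  -- The layer-cake formula for one factor, under `P` weighted by the product of the others.
  induction s using Finset.induction_on generalizing P C with
  | empty => simpa using h (fun _ => 1) fun _ => one_pos
  | insert a s ha ih =>
    set W : Ω → ℝ≥0∞ := fun ω => ∏ i ∈ s, ENNReal.ofReal (Y i ω) with hW_def
    have hW : AEMeasurable W P := by fun_prop
    have hac := withDensity_absolutelyContinuous P W
    have hlevel : ∀ t > (0 : ℝ), P.withDensity W {ω | t < Y a ω} ≤
        C * m a t * ∏ i ∈ s, ∫⁻ t in Set.Ioi 0, m i t := by
      intro t ht
      have hset : NullMeasurableSet {ω | t < Y a ω} P :=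
        nullMeasurableSet_lt aemeasurable_const (hY a)
      rw [withDensity_apply₀ W hset]
      refine ih (fun i => (hY i).restrict) _ fun u hu => ?_
      have hjoint := h (Function.update u a t) fun i => by
        rcases eq_or_ne i a with rfl | hi <;> simp [*]
      have hne : ∀ i ∈ s, Function.update u a t i = u i := fun i hi =>
        Function.update_of_ne (ne_of_mem_of_not_mem hi ha) _ _
      rw [Finset.prod_insert ha, Finset.set_biInter_insert, Function.update_self,
        Finset.prod_congr rfl fun i hi => by rw [hne i hi],
        Set.iInter₂_congr fun i hi => by rw [hne i hi], ← mul_assoc] at hjoint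
      rwa [Measure.restrict_apply₀' hset, Set.inter_comm]
    calc ∫⁻ ω, ∏ i ∈ insert a s, ENNReal.ofReal (Y i ω) ∂P
        = ∫⁻ ω, ENNReal.ofReal (Y a ω) ∂P.withDensity W := by
          rw [lintegral_withDensity_eq_lintegral_mul₀ hW (hY a).ennreal_ofReal]
          simp only [Finset.prod_insert ha, hW_def, Pi.mul_apply, mul_comm]
      _ = ∫⁻ t in Set.Ioi 0, P.withDensity W {ω | t < Y a ω} :=
          lintegral_eq_lintegral_meas_lt _ (ae_of_all _ (hY0 a)) ((hY a).mono_ac hac)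
      _ ≤ ∫⁻ t in Set.Ioi 0, C * m a t * ∏ i ∈ s, ∫⁻ t in Set.Ioi 0, m i t :=
          setLIntegral_mono' measurableSet_Ioi hlevel
      _ = C * ∏ i ∈ insert a s, ∫⁻ t in Set.Ioi 0, m i t := by
          rw [lintegral_mul_const _ ((hm a).const_mul C), lintegral_const_mul _ (hm a),
            Finset.prod_insert ha, mul_assoc]

theorem measurable_measure_lt (P : Measure Ω) (Y : Ω → ℝ) :
    Measurable fun t : ℝ => P {ω | t < Y ω} :=
  Antitone.measurable fun _ _ hab => measure_mono fun _ hω => lt_of_le_of_lt hab hω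

end JointTails

namespace ENDProb

variable {Ω : Type} [MeasurableSpace Ω] {P : Measure Ω} [IsProbabilityMeasure P] {K : ℝ}
  {X : ℕ → Ω → ℝ}

theorem upperEND (h : ENDProb P K X) : UpperEND P K.toNNReal X := by
  classical
  intro s x
  obtain ⟨n, hn⟩ := s.exists_nat_subset_range
  let y : ℕ → ℕ → ℝ := fun i m => if i ∈ s then x i else -m
  have hy : ∀ i, Antitone (y i) := fun i m m' hm => by
    by_cases hi : i ∈ s <;> simp [y, hi, hm]
  refine measure_biInter_le_of_subset hn (A := fun i m => {ω | y i m < X i ω})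
    (fun i m m' hm ω hω => (hy i hm).trans_lt hω) (fun m => (h n fun i => y i m).2) ?_ ?_
  · intro i hi
    simp only [y, hi, if_true, Set.iUnion_const]
  · intro i hi
    refine Set.eq_univ_of_forall fun ω => Set.mem_iUnion.2 ?_
    obtain ⟨m, hm⟩ := exists_nat_gt (-X i ω)
    exact ⟨m, by simpa [y, hi] using neg_lt.1 hm⟩

theorem upperEND_neg (h : ENDProb P K X) : UpperEND P K.toNNReal (-X) := by
  classical
  intro s x
  obtain ⟨n, hn⟩ := s.exists_nat_subset_range
  -- `{x < -X}` is the increasing union of the lower tails `{X ≤ -x - 1 / (m + 1)}`.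
  let y : ℕ → ℕ → ℝ := fun i m => if i ∈ s then -x i - 1 / ((m : ℝ) + 1) else m
  have hy : ∀ i, Monotone (y i) := fun i m m' hm => by
    by_cases hi : i ∈ s
    · simpa only [y, hi, if_true] using sub_le_sub_left (Nat.one_div_le_one_div hm) _
    · simpa [y, hi] using hm
  refine measure_biInter_le_of_subset hn (A := fun i m => {ω | X i ω ≤ y i m})
    (fun i m m' hm ω hω => le_trans hω (hy i hm)) (fun m => (h n fun i => y i m).1) ?_ ?_
  · intro i hi
    ext ω
    simp only [y, hi, if_true, Set.mem_iUnion, Set.mem_ofPred_eq, Pi.neg_apply]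
    refine ⟨fun ⟨m, hm⟩ => ?_, fun hω => ?_⟩
    · linarith [Nat.one_div_pos_of_nat (α := ℝ) (n := m)]
    · obtain ⟨m, hm⟩ := exists_nat_one_div_lt (show 0 < -X i ω - x i by linarith)
      exact ⟨m, by linarith⟩
  · intro i hi
    refine Set.eq_univ_of_forall fun ω => Set.mem_iUnion.2 ?_
    obtain ⟨m, hm⟩ := exists_nat_ge (X i ω)
    exact ⟨m, by simpa [y, hi] using hm⟩

end ENDProb

namespace UpperEND

variable {Ω ι : Type*} [MeasurableSpace Ω] {P : Measure Ω} {K : ℝ≥0} {X : ι → Ω → ℝ}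

theorem add_const (h : UpperEND P K X) (c : ι → ℝ) : UpperEND P K fun i ω => X i ω + c i := by
  intro s x
  simpa only [sub_lt_iff_lt_add] using h s fun i => x i - c i

theorem min_const (h : UpperEND P K X) (b : ℝ) : UpperEND P K fun i ω => min (X i ω) b := by
  intro s x
  simp only [lt_min_iff]
  by_cases hb : ∀ i ∈ s, x i < b
  · have hset : ∀ i ∈ s, {ω | x i < X i ω ∧ x i < b} = {ω | x i < X i ω} := fun i hi => by
      simp only [hb i hi, and_true]
    rw [Set.iInter₂_congr hset, Finset.prod_congr rfl fun i hi => by rw [hset i hi]]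
    exact h s x
  · push Not at hb
    obtain ⟨i, hi, hbx⟩ := hb
    have hempty : (⋂ i ∈ s, {ω | x i < X i ω ∧ x i < b}) = ∅ :=
      Set.eq_empty_of_forall_notMem fun ω hω => (Set.mem_iInter₂.1 hω i hi).2.not_ge hbx
    simp [hempty]

theorem lintegral_prod_exp_mul_le (h : UpperEND P K X) (hX : ∀ i, AEMeasurable (X i) P) {l : ℝ}
    (hl : 0 < l) (s : Finset ι) :
    ∫⁻ ω, ∏ i ∈ s, ENNReal.ofReal (Real.exp (l * X i ω)) ∂P ≤
      K * ∏ i ∈ s, ∫⁻ ω, ENNReal.ofReal (Real.exp (l * X i ω)) ∂P := by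
  have hY : ∀ i, AEMeasurable (fun ω => Real.exp (l * X i ω)) P := fun i => by fun_prop
  have hset : ∀ (i : ι) {t : ℝ}, 0 < t →
      {ω | t < Real.exp (l * X i ω)} = {ω | Real.log t / l < X i ω} := fun i t ht => by
    simp only [← Real.log_lt_iff_lt_exp ht, div_lt_iff₀' hl]
  simp_rw [lintegral_eq_lintegral_meas_lt P (ae_of_all _ fun _ => (Real.exp_pos _).le) (hY _)]
  refine lintegral_prod_ofReal_le (fun i => measurable_measure_lt P _) s hY
    (fun _ _ => (Real.exp_pos _).le) K fun t ht => ?_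
  simp only [hset _ (ht _)]
  exact h s fun i => Real.log (t i) / l

theorem mgf_sum_le (h : UpperEND P K X) (hX : ∀ i, AEMeasurable (X i) P) {l : ℝ} (hl : 0 < l)
    (hint : ∀ i, Integrable (fun ω => Real.exp (l * X i ω)) P) (s : Finset ι) :
    mgf (fun ω => ∑ i ∈ s, X i ω) P l ≤ K * ∏ i ∈ s, mgf (X i) P l := by
  have hexp : ∀ ω, Real.exp (l * ∑ i ∈ s, X i ω) = ∏ i ∈ s, Real.exp (l * X i ω) := fun ω => by
    rw [Finset.mul_sum, Real.exp_sum]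
  have hmgf : ∀ i, ∫⁻ ω, ENNReal.ofReal (Real.exp (l * X i ω)) ∂P =
      ENNReal.ofReal (mgf (X i) P l) := fun i =>
    (ofReal_integral_eq_lintegral_ofReal (hint i) (ae_of_all _ fun _ => (Real.exp_pos _).le)).symm
  have hprod : 0 ≤ ∏ i ∈ s, mgf (X i) P l := Finset.prod_nonneg fun i _ => mgf_nonneg
  have hle := h.lintegral_prod_exp_mul_le hX hl s
  simp only [hmgf,
    ← ENNReal.ofReal_prod_of_nonneg fun i _ => mgf_nonneg (X := X i) (t := l) (μ := P),
    ← ENNReal.ofReal_prod_of_nonneg fun i _ => (Real.exp_pos (l * X i _)).le, ← hexp] at hle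
  rw [← ENNReal.ofReal_coe_nnreal, ← ENNReal.ofReal_mul K.coe_nonneg] at hle
  rw [mgf, integral_eq_lintegral_of_nonneg_ae (ae_of_all _ fun _ => (Real.exp_pos _).le)
    (AEMeasurable.aestronglyMeasurable (by fun_prop))]
  exact ENNReal.toReal_le_of_le_ofReal (mul_nonneg K.coe_nonneg hprod) hle

end UpperEND

section TruncatedMGF

variable {Ω : Type*} [MeasurableSpace Ω] {P : Measure Ω} [IsProbabilityMeasure P]

theorem mgf_min_const_le {X : Ω → ℝ} (hX : MemLp X 2 P) (hmean : ∫ ω, X ω ∂P = 0) {l b : ℝ}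
    (hl : 0 ≤ l) (hb : 0 ≤ b) :
    mgf (fun ω => min (X ω) b) P l ≤ Real.exp (l ^ 2 / 2 * (Real.exp (l * b) * Var[X; P])) := by
  have hXi : Integrable X P := hX.integrable one_le_two
  set q := l ^ 2 / 2 * Real.exp (l * b)
  have hlin : Integrable (fun ω => 1 + l * X ω) P := (integrable_const _).add (hXi.const_mul l)
  have hsq : Integrable (fun ω => q * X ω ^ 2) P := hX.integrable_sq.const_mul q
  have hpointwise : ∀ ω, Real.exp (l * min (X ω) b) ≤ 1 + l * X ω + q * X ω ^ 2 := by
    intro ω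
    have hexp := exp_le_one_add_add_sq_mul_exp
      (mul_le_mul_of_nonneg_left (min_le_right (X ω) b) hl) (mul_nonneg hl hb)
    have hmin : l * min (X ω) b ≤ l * X ω := mul_le_mul_of_nonneg_left (min_le_left _ _) hl
    have hminsq : min (X ω) b ^ 2 ≤ X ω ^ 2 := by
      rcases le_total (X ω) b with h | h
      · rw [min_eq_left h]
      · rw [min_eq_right h]
        exact pow_le_pow_left₀ hb h 2
    have hquad : q * min (X ω) b ^ 2 ≤ q * X ω ^ 2 :=
      mul_le_mul_of_nonneg_left hminsq (by positivity)
    linarith [show (l * min (X ω) b) ^ 2 / 2 * Real.exp (l * b) = q * min (X ω) b ^ 2 by ring]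
  calc mgf (fun ω => min (X ω) b) P l
      ≤ ∫ ω, (1 + l * X ω + q * X ω ^ 2) ∂P :=
        integral_mono_of_nonneg (ae_of_all _ fun _ => (Real.exp_pos _).le) (hlin.add hsq)
          (ae_of_all _ hpointwise)
    _ = l ^ 2 / 2 * (Real.exp (l * b) * Var[X; P]) + 1 := by
        rw [integral_add hlin hsq, integral_add (integrable_const _) (hXi.const_mul l),
          integral_const_mul, integral_const_mul, hmean,
          variance_of_integral_eq_zero hX.aestronglyMeasurable.aemeasurable hmean]
        simp only [integral_const, probReal_univ, smul_eq_mul, mul_one, mul_zero, add_zero]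
        ring
    _ ≤ Real.exp (l ^ 2 / 2 * (Real.exp (l * b) * Var[X; P])) := Real.add_one_le_exp _

end TruncatedMGF

section TruncatedSums

variable {Ω ι : Type*} [MeasurableSpace Ω] {P : Measure Ω} [IsProbabilityMeasure P] {K : ℝ≥0}
  {X : ι → Ω → ℝ}

theorem UpperEND.measureReal_sum_min_ge_le (h : UpperEND P K X) (hX : ∀ i, MemLp (X i) 2 P)
    (hmean : ∀ i, ∫ ω, X i ω ∂P = 0) {l b v : ℝ} (hl : 0 < l) (hb : 0 ≤ b)
    (hv : ∀ i, Real.exp (l * b) * Var[X i; P] ≤ v) (s : Finset ι) (t : ℝ) :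
    P.real {ω | t ≤ ∑ i ∈ s, min (X i ω) b} ≤ K * Real.exp (s.card * (l ^ 2 * v / 2) - l * t) := by
  have hZ : ∀ i, AEMeasurable (fun ω => min (X i ω) b) P := fun i =>
    (hX i).aestronglyMeasurable.aemeasurable.min aemeasurable_const
  have hmgf : ∀ i, mgf (fun ω => min (X i ω) b) P l ≤ Real.exp (l ^ 2 * v / 2) := fun i =>
    (mgf_min_const_le (hX i) (hmean i) hl.le hb).trans <| Real.exp_le_exp.2 <| by
      linarith [mul_le_mul_of_nonneg_left (hv i) (sq_nonneg l)]
  calc P.real {ω | t ≤ ∑ i ∈ s, min (X i ω) b}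
      ≤ Real.exp (-l * t) * mgf (fun ω => ∑ i ∈ s, min (X i ω) b) P l :=
        measure_ge_le_exp_mul_mgf t hl.le <| integrable_exp_mul_of_le l (s.card • b) hl.le
          (by fun_prop) <| ae_of_all _ fun ω =>
            Finset.sum_le_card_nsmul s _ b fun i _ => min_le_right _ _
    _ ≤ Real.exp (-l * t) * (K * ∏ i ∈ s, Real.exp (l ^ 2 * v / 2)) := by
        have hsum := (h.min_const b).mgf_sum_le hZ hl (fun i => integrable_exp_mul_of_le l b hl.le
          (hZ i) (ae_of_all _ fun _ => min_le_right _ _)) s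
        have hprod : ∏ i ∈ s, mgf (fun ω => min (X i ω) b) P l ≤
            ∏ _i ∈ s, Real.exp (l ^ 2 * v / 2) :=
          Finset.prod_le_prod (fun _ _ => mgf_nonneg) fun i _ => hmgf i
        gcongr
        exact hsum.trans (mul_le_mul_of_nonneg_left hprod K.coe_nonneg)
    _ = K * Real.exp (s.card * (l ^ 2 * v / 2) - l * t) := by
        rw [Finset.prod_const, ← Real.exp_nat_mul, mul_left_comm, ← Real.exp_add]
        ring_nf

end TruncatedSums

theorem one_le_paperLog (x : ℝ) : 1 ≤ paperLog x :=
  (Real.le_log_iff_exp_le ((Real.exp_pos 1).trans_le (le_max_right _ _))).2 (le_max_right _ _)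

theorem log_le_paperLog {x : ℝ} (hx : 0 < x) : Real.log x ≤ paperLog x :=
  Real.log_le_log hx (le_max_left _ _)

theorem paperLog_mono : Monotone paperLog := fun _ _ h =>
  Real.log_le_log ((Real.exp_pos 1).trans_le (le_max_right _ _)) (max_le_max_right _ h)

theorem paperLog_le_self {x : ℝ} (hx : 1 ≤ x) : paperLog x ≤ x :=
  (Real.log_le_iff_le_exp ((Real.exp_pos 1).trans_le (le_max_right _ _))).2 <|
    max_le ((le_add_of_nonneg_right zero_le_one).trans (Real.add_one_le_exp x))
      (Real.exp_le_exp.2 hx)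

theorem paperLog_eq_log {x : ℝ} (hx : Real.exp 1 ≤ x) : paperLog x = Real.log x := by
  rw [paperLog, max_eq_left hx]

/-- The normalisation `√(2 x log log x)` of the law of the iterated logarithm at a real scale `x`,
so that it can be evaluated along the geometric scale `θ ^ k`. -/
def lilScale (x : ℝ) : ℝ := √(2 * x * paperLog (paperLog x))

theorem monotoneOn_lilScale : MonotoneOn lilScale (Set.Ici 0) := by
  intro x hx y hy h
  rw [Set.mem_Ici] at hx hy
  exact Real.sqrt_le_sqrt <| mul_le_mul (by linarith) (paperLog_mono (paperLog_mono h))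
    (zero_le_one.trans (one_le_paperLog _)) (by linarith)

theorem lilScale_sq {x : ℝ} (hx : 0 ≤ x) : lilScale x ^ 2 = 2 * x * paperLog (paperLog x) :=
  Real.sq_sqrt <| mul_nonneg (by positivity) (zero_le_one.trans (one_le_paperLog _))

theorem sqrt_le_lilScale {x : ℝ} (hx : 0 ≤ x) : √x ≤ lilScale x :=
  Real.sqrt_le_sqrt <| by nlinarith [one_le_paperLog (paperLog x)]

theorem lilScale_pos {x : ℝ} (hx : 0 < x) : 0 < lilScale x :=
  (Real.sqrt_pos.2 hx).trans_le (sqrt_le_lilScale hx.le)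

theorem lilScale_div_self_le {x : ℝ} (hx : Real.exp 1 ≤ x) :
    lilScale x / x ≤ 2 * (Real.log x / √x) := by
  have hx0 : 0 < x := (Real.exp_pos 1).trans_le hx
  have hlog : 1 ≤ Real.log x := paperLog_eq_log hx ▸ one_le_paperLog x
  have hL : paperLog (paperLog x) ≤ Real.log x :=
    (paperLog_le_self (one_le_paperLog x)).trans_eq (paperLog_eq_log hx)
  rw [div_le_iff₀ hx0, mul_assoc, div_mul_eq_mul_div, mul_div_assoc, Real.div_sqrt]
  refine Real.sqrt_le_iff.2 ⟨by positivity, ?_⟩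
  calc 2 * x * paperLog (paperLog x) ≤ 2 * x * Real.log x := by gcongr
    _ ≤ 4 * Real.log x ^ 2 * x := by nlinarith [mul_le_mul_of_nonneg_left hlog hx0.le]
    _ = (2 * (Real.log x * √x)) ^ 2 := by rw [mul_pow, mul_pow, Real.sq_sqrt hx0.le]; ring

theorem exp_neg_mul_paperLog_paperLog_le {x c : ℝ} (hx : 1 < x) (hc : 0 ≤ c) :
    Real.exp (-(c * paperLog (paperLog x))) ≤ Real.log x ^ (-c) := by
  have hlog : 0 < Real.log x := Real.log_pos hx
  have hle : Real.log (Real.log x) ≤ paperLog (paperLog x) :=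
    (Real.log_le_log hlog (log_le_paperLog (one_pos.trans hx))).trans
      (log_le_paperLog (one_pos.trans_le (one_le_paperLog x)))
  rw [Real.rpow_def_of_pos hlog]
  refine Real.exp_le_exp.2 ?_
  nlinarith [mul_le_mul_of_nonneg_left hle hc]

theorem tendsto_log_div_sqrt_mul_rpow_atTop {β : ℝ} (hβ : β < 1 / 2) :
    Tendsto (fun x : ℝ => Real.log x / √x * x ^ β) atTop (𝓝 0) := by
  refine ((isLittleO_log_rpow_atTop (sub_pos.2 hβ)).tendsto_div_nhds_zero).congr' ?_
  filter_upwards [eventually_gt_atTop 0] with x hx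
  rw [Real.rpow_sub hx, ← Real.sqrt_eq_rpow, div_div_eq_mul_div, mul_div_right_comm]

theorem tendsto_mul_rpow_of_le_log_div_sqrt {l x : ℕ → ℝ} {β C : ℝ} (hβ : β < 1 / 2)
    (hx : Tendsto x atTop atTop) (hl0 : ∀ᶠ k in atTop, 0 ≤ l k)
    (hl : ∀ᶠ k in atTop, l k ≤ C * (Real.log (x k) / √(x k))) :
    Tendsto (fun k => l k * x k ^ β) atTop (𝓝 0) := by
  have hlim := ((tendsto_log_div_sqrt_mul_rpow_atTop hβ).comp hx).const_mul C
  rw [mul_zero] at hlim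
  refine squeeze_zero' ?_ ?_ hlim
  · filter_upwards [hl0, hx.eventually_ge_atTop 0] with k hk hxk
    positivity
  · filter_upwards [hl, hx.eventually_ge_atTop 0] with k hk hxk
    simpa only [Function.comp_apply, mul_assoc] using
      mul_le_mul_of_nonneg_right hk (Real.rpow_nonneg hxk β)

section BorelCantelli

variable {Ω ι : Type*} [MeasurableSpace Ω] {P : Measure Ω} [IsFiniteMeasure P]

theorem ae_eventually_notMem_of_measureReal_le {A : ℕ → Set Ω} {u : ℕ → ℝ} (hu : Summable u)
    (hA : ∀ᶠ k in atTop, P.real (A k) ≤ u k) : ∀ᵐ ω ∂P, ∀ᶠ k in atTop, ω ∉ A k := by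
  refine ae_eventually_notMem ?_
  have hsum : Summable fun k => P.real (A k) := hu.of_norm_bounded_eventually_nat <| by
    simpa only [Real.norm_of_nonneg measureReal_nonneg] using hA
  simpa only [ofReal_measureReal (measure_ne_top P _)] using hsum.tsum_ofReal_ne_top

theorem ae_eventually_forall_mem_notMem {F : ℕ → Finset ι} {A : ℕ → ι → Set Ω} {a u : ℕ → ℝ}
    (hu : Summable u) (hA : ∀ᶠ k in atTop, ∀ j ∈ F k, P.real (A k j) ≤ a k)
    (hau : ∀ᶠ k in atTop, (F k).card * a k ≤ u k) :
    ∀ᵐ ω ∂P, ∀ᶠ k in atTop, ∀ j ∈ F k, ω ∉ A k j := by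
  have hunion : ∀ᶠ k in atTop, P.real (⋃ j ∈ F k, A k j) ≤ u k := by
    filter_upwards [hA, hau] with k hk hak
    refine (measureReal_biUnion_finset_le _ _).trans (le_trans ?_ hak)
    simpa only [nsmul_eq_mul] using Finset.sum_le_card_nsmul _ _ _ hk
  filter_upwards [ae_eventually_notMem_of_measureReal_le hu hunion] with ω hω
  filter_upwards [hω] with k hk
  simpa only [Set.mem_iUnion, not_exists] using hk

end BorelCantelli

section Blocks

variable {Ω ι : Type*} [MeasurableSpace Ω] {P : Measure Ω} [IsProbabilityMeasure P] {K : ℝ≥0}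
  {X : ι → Ω → ℝ} {σ v : ℝ}

theorem UpperEND.ae_eventually_forall_sum_min_lt (h : UpperEND P K X) (hX : ∀ i, MemLp (X i) 2 P)
    (hmean : ∀ i, ∫ ω, X i ω ∂P = 0) (hvar : ∀ i, Var[X i; P] ≤ σ ^ 2) (hσv : σ ^ 2 < v)
    {l b t a u : ℕ → ℝ} (hl : ∀ᶠ k in atTop, 0 < l k) (hb : ∀ᶠ k in atTop, 0 ≤ b k)
    (hlb : Tendsto (fun k => l k * b k) atTop (𝓝 0)) {F : ℕ → Finset (Finset ι)}
    (hF : ∀ᶠ k in atTop, ∀ s ∈ F k, s.card ≤ a k) (hu : Summable u)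
    (hle : ∀ᶠ k in atTop, (F k).card * Real.exp (a k * (l k ^ 2 * v / 2) - l k * t k) ≤ u k) :
    ∀ᵐ ω ∂P, ∀ᶠ k in atTop, ∀ s ∈ F k, ∑ i ∈ s, min (X i ω) (b k) < t k := by
  have hv : 0 ≤ v := (sq_nonneg σ).trans hσv.le
  have hexp : ∀ᶠ k in atTop, Real.exp (l k * b k) * σ ^ 2 < v := by
    refine (((Real.continuous_exp.tendsto 0).comp hlb).mul_const (σ ^ 2)).eventually_lt_const ?_
    rwa [Real.exp_zero, one_mul]
  suffices ∀ᵐ ω ∂P, ∀ᶠ k in atTop, ∀ s ∈ F k, ω ∉ {ω | t k ≤ ∑ i ∈ s, min (X i ω) (b k)} by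
    simpa only [Set.mem_ofPred_eq, not_le] using this
  refine ae_eventually_forall_mem_notMem
    (a := fun k => K * Real.exp (a k * (l k ^ 2 * v / 2) - l k * t k)) (hu.mul_left (K : ℝ)) ?_ ?_
  · filter_upwards [hl, hb, hF, hexp] with k hlk hbk hFk hexpk s hs
    have hvark : ∀ i, Real.exp (l k * b k) * Var[X i; P] ≤ v := fun i =>
      (mul_le_mul_of_nonneg_left (hvar i) (Real.exp_pos _).le).trans hexpk.le
    refine (h.measureReal_sum_min_ge_le hX hmean hlk hbk hvark s (t k)).trans ?_
    gcongr
    exact hFk s hs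
  · filter_upwards [hle] with k hk
    rw [mul_left_comm]
    gcongr

end Blocks

section GeometricScale

variable {θ : ℝ}

theorem summable_log_pow_rpow_neg (hθ : 1 < θ) {q : ℝ} (hq : 1 < q) :
    Summable fun k : ℕ => Real.log (θ ^ k) ^ (-q) := by
  have hlog : 0 < Real.log θ := Real.log_pos hθ
  have hsum : Summable fun k : ℕ => ((k : ℝ) ^ q)⁻¹ * Real.log θ ^ (-q) :=
    (Real.summable_nat_rpow_inv.2 hq).mul_right _
  refine hsum.congr fun k => ?_
  rw [Real.log_pow, Real.mul_rpow k.cast_nonneg hlog.le, Real.rpow_neg k.cast_nonneg]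

end GeometricScale

theorem chernoff_exponent_le_sub_two_mul_log {x c : ℝ} (hx : 1 < x) (hc : 0 < c) (v : ℝ) :
    x / Real.log x ^ 2 * ((2 / c * (Real.log x / √x)) ^ 2 * v / 2) -
      2 / c * (Real.log x / √x) * (c * lilScale x) ≤ 2 * v / c ^ 2 - 2 * Real.log x := by
  have hx0 : 0 < x := one_pos.trans hx
  have hlog : 0 < Real.log x := Real.log_pos hx
  have : 0 < √x := Real.sqrt_pos.2 hx0
  have hvariance : x / Real.log x ^ 2 * ((2 / c * (Real.log x / √x)) ^ 2 * v / 2) =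
      2 * v / c ^ 2 := by
    simp only [mul_pow, div_pow, Real.sq_sqrt hx0.le]
    field_simp
  have hthreshold : 2 * Real.log x ≤ 2 / c * (Real.log x / √x) * (c * lilScale x) :=
    calc 2 * Real.log x = 2 / c * (Real.log x / √x) * (c * √x) := by field_simp
      _ ≤ 2 / c * (Real.log x / √x) * (c * lilScale x) := by
          gcongr
          exact sqrt_le_lilScale hx0.le
  rw [hvariance]
  exact sub_le_sub_left hthreshold _

section LILBlocks

variable {Ω ι : Type*} [MeasurableSpace Ω] {P : Measure Ω} [IsProbabilityMeasure P] {K : ℝ≥0}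
  {X : ι → Ω → ℝ} {σ v θ β c η A : ℝ} {F : ℕ → Finset (Finset ι)}

theorem UpperEND.ae_eventually_sum_min_lt_of_card_le_log_rpow (h : UpperEND P K X)
    (hX : ∀ i, MemLp (X i) 2 P) (hmean : ∀ i, ∫ ω, X i ω ∂P = 0)
    (hvar : ∀ i, Var[X i; P] ≤ σ ^ 2) (hσv : σ ^ 2 < v) (hθ : 1 < θ) (hβ : β < 1 / 2)
    (hc : 0 < c) (hη : 0 < η) (hF : ∀ᶠ k in atTop, ∀ s ∈ F k, s.card ≤ η * θ ^ k) {r : ℝ}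
    (hr : r + 1 < c ^ 2 / (η * v))
    (hcard : ∀ᶠ k in atTop, (F k).card ≤ A * Real.log (θ ^ k) ^ r) :
    ∀ᵐ ω ∂P, ∀ᶠ k in atTop, ∀ s ∈ F k,
      ∑ i ∈ s, min (X i ω) ((θ ^ k) ^ β) < c * lilScale (θ ^ k) := by
  have hv : 0 < v := (sq_nonneg σ).trans_lt hσv
  have hθk : ∀ k : ℕ, 0 < θ ^ k := fun k => pow_pos (one_pos.trans hθ) k
  have hpow := tendsto_pow_atTop_atTop_of_one_lt hθ
  set q := c ^ 2 / (η * v) with hq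
  let l : ℕ → ℝ := fun k => c / (η * v) * (lilScale (θ ^ k) / θ ^ k)
  have hl : ∀ k, 0 < l k := fun k =>
    mul_pos (by positivity) (div_pos (lilScale_pos (hθk k)) (hθk k))
  have hlog : ∀ᶠ k in atTop, l k ≤ c / (η * v) * 2 * (Real.log (θ ^ k) / √(θ ^ k)) := by
    filter_upwards [hpow.eventually_ge_atTop (Real.exp 1)] with k hk
    rw [mul_assoc]
    exact mul_le_mul_of_nonneg_left (lilScale_div_self_le hk) (by positivity)
  have hexponent : ∀ k, η * θ ^ k * (l k ^ 2 * v / 2) - l k * (c * lilScale (θ ^ k)) =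
      -(q * paperLog (paperLog (θ ^ k))) := fun k => by
    have := (hθk k).ne'
    have hsq := lilScale_sq (hθk k).le
    simp only [l, hq]
    field_simp
    linear_combination (-hsq)
  refine h.ae_eventually_forall_sum_min_lt hX hmean hvar hσv (Eventually.of_forall hl)
    (Eventually.of_forall fun k => (Real.rpow_pos_of_pos (hθk k) β).le)
    (tendsto_mul_rpow_of_le_log_div_sqrt hβ hpow (Eventually.of_forall fun k => (hl k).le) hlog)
    hF ((summable_log_pow_rpow_neg hθ (by linarith : 1 < q - r)).mul_left A) ?_
  filter_upwards [hcard, hpow.eventually_gt_atTop 1] with k hk hk1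
  have hlogk : 0 < Real.log (θ ^ k) := Real.log_pos hk1
  calc (F k).card * Real.exp (η * θ ^ k * (l k ^ 2 * v / 2) - l k * (c * lilScale (θ ^ k)))
      ≤ A * Real.log (θ ^ k) ^ r * Real.log (θ ^ k) ^ (-q) := by
        rw [hexponent]
        exact mul_le_mul hk (exp_neg_mul_paperLog_paperLog_le hk1 (by positivity))
          (Real.exp_pos _).le ((F k).card.cast_nonneg.trans hk)
    _ = A * Real.log (θ ^ k) ^ (-(q - r)) := by
        rw [mul_assoc, ← Real.rpow_add hlogk, neg_sub, sub_eq_add_neg]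

theorem UpperEND.ae_eventually_sum_min_lt_of_card_le_pow (h : UpperEND P K X)
    (hX : ∀ i, MemLp (X i) 2 P) (hmean : ∀ i, ∫ ω, X i ω ∂P = 0)
    (hvar : ∀ i, Var[X i; P] ≤ σ ^ 2) (hθ : 1 < θ) (hβ : β < 1 / 2) (hc : 0 < c)
    (hF : ∀ᶠ k in atTop, ∀ s ∈ F k, s.card ≤ θ ^ k / Real.log (θ ^ k) ^ 2)
    (hcard : ∀ᶠ k in atTop, (F k).card ≤ A * θ ^ k) :
    ∀ᵐ ω ∂P, ∀ᶠ k in atTop, ∀ s ∈ F k,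
      ∑ i ∈ s, min (X i ω) ((θ ^ k) ^ β) < c * lilScale (θ ^ k) := by
  have hpow := tendsto_pow_atTop_atTop_of_one_lt hθ
  let l : ℕ → ℝ := fun k => 2 / c * (Real.log (θ ^ k) / √(θ ^ k))
  have hlarge := hpow.eventually_gt_atTop 1
  have hl : ∀ᶠ k in atTop, 0 < l k := by
    filter_upwards [hlarge] with k hk
    have := Real.log_pos hk
    have := Real.sqrt_pos.2 (one_pos.trans hk)
    positivity
  have hsummable : Summable fun k : ℕ => A * Real.exp (2 * (σ ^ 2 + 1) / c ^ 2) * θ⁻¹ ^ k :=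
    (summable_geometric_of_lt_one (inv_nonneg.2 (zero_le_one.trans hθ.le))
      (inv_lt_one_of_one_lt₀ hθ)).mul_left _
  refine h.ae_eventually_forall_sum_min_lt hX hmean hvar (lt_add_one (σ ^ 2)) hl
    (hlarge.mono fun k hk => Real.rpow_nonneg (zero_le_one.trans hk.le) β)
    (tendsto_mul_rpow_of_le_log_div_sqrt hβ hpow (hl.mono fun k hk => hk.le)
      (Eventually.of_forall fun k => le_rfl)) hF hsummable ?_
  filter_upwards [hcard, hlarge] with k hk hk1
  calc _ ≤ A * θ ^ k * Real.exp (2 * (σ ^ 2 + 1) / c ^ 2 - 2 * Real.log (θ ^ k)) :=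
        mul_le_mul hk (Real.exp_le_exp.2 (chernoff_exponent_le_sub_two_mul_log hk1 hc _))
          (Real.exp_pos _).le ((F k).card.cast_nonneg.trans hk)
    _ = A * Real.exp (2 * (σ ^ 2 + 1) / c ^ 2) * θ⁻¹ ^ k := by
        rw [Real.exp_sub, two_mul (Real.log _), Real.exp_add,
          Real.exp_log (one_pos.trans hk1), inv_pow]
        field_simp

end LILBlocks

/-- The blocks `[N, N + h * q)` that fit into `[N, N + D)`: they reach the points of the mesh of
width `h` from its origin `N`. -/
def meshBlocks (N D h : ℕ) : Finset (Finset ℕ) :=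
  (Finset.range (D / h + 1)).image fun q => Finset.Ico N (N + h * q)

/-- The blocks joining each point `N + d` of `[N, N + D]` to the last point of the mesh of width
`h` and origin `N` before it. -/
def remainderBlocks (N D h : ℕ) : Finset (Finset ℕ) :=
  (Finset.range (D + 1)).image fun d => Finset.Ico (N + h * (d / h)) (N + d)

section Mesh

variable {N D h : ℕ} {s : Finset ℕ}

theorem card_le_of_mem_meshBlocks (hs : s ∈ meshBlocks N D h) : s.card ≤ D := by
  obtain ⟨q, hq, rfl⟩ := Finset.mem_image.1 hs
  rw [Nat.card_Ico, Nat.add_sub_cancel_left]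
  exact (Nat.mul_le_mul_left h (Finset.mem_range_succ_iff.1 hq)).trans (Nat.mul_div_le D h)

theorem card_meshBlocks_le : (meshBlocks N D h).card ≤ D / h + 1 :=
  Finset.card_image_le.trans_eq (Finset.card_range _)

theorem card_lt_of_mem_remainderBlocks (hh : 0 < h) (hs : s ∈ remainderBlocks N D h) :
    s.card < h := by
  obtain ⟨d, -, rfl⟩ := Finset.mem_image.1 hs
  rw [Nat.card_Ico, Nat.add_sub_add_left, ← Nat.mod_eq_sub]
  exact Nat.mod_lt d hh

theorem card_remainderBlocks_le : (remainderBlocks N D h).card ≤ D + 1 :=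
  Finset.card_image_le.trans_eq (Finset.card_range _)

theorem exists_sum_range_eq_add_add {n : ℕ} (hNn : N ≤ n) (hnD : n ≤ N + D) :
    ∃ s ∈ meshBlocks N D h, ∃ t ∈ remainderBlocks N D h, ∀ f : ℕ → ℝ,
      ∑ i ∈ Finset.range n, f i = ∑ i ∈ Finset.range N, f i + ∑ i ∈ s, f i + ∑ i ∈ t, f i := by
  obtain ⟨d, rfl⟩ := Nat.exists_eq_add_of_le hNn
  have hd : d ≤ D := Nat.le_of_add_le_add_left hnD
  refine ⟨_, Finset.mem_image_of_mem _ (Finset.mem_range_succ_iff.2 (Nat.div_le_div_right hd)),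
    _, Finset.mem_image_of_mem _ (Finset.mem_range_succ_iff.2 hd), fun f => ?_⟩
  rw [Finset.sum_range_add_sum_Ico f (Nat.le_add_right _ _), Finset.sum_range_add_sum_Ico f
    (Nat.add_le_add_left (Nat.mul_div_le d h) N)]

end Mesh

section MeshAsymptotics

variable {θ : ℝ}

theorem eventually_natFloor_mul_sub_natFloor_le (hθ : 1 < θ) :
    ∀ᶠ x : ℝ in atTop, ((⌊θ * x⌋₊ - ⌊x⌋₊ : ℕ) : ℝ) ≤ 2 * (θ - 1) * x := by
  have hlim : Tendsto (fun x => (θ - 1) * x) atTop atTop :=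
    tendsto_id.const_mul_atTop (sub_pos.2 hθ)
  filter_upwards [eventually_ge_atTop 0, hlim.eventually_ge_atTop 1] with x hx hx1
  have hle : ⌊x⌋₊ ≤ ⌊θ * x⌋₊ := Nat.floor_mono (le_mul_of_one_le_left hx hθ.le)
  have hθx : (⌊θ * x⌋₊ : ℝ) ≤ θ * x := Nat.floor_le (by positivity)
  rw [Nat.cast_sub hle]
  linarith [Nat.sub_one_lt_floor x]

theorem eventually_natDiv_add_one_le_log_sq {D : ℝ → ℕ} {C : ℝ}
    (hD : ∀ᶠ x in atTop, (D x : ℝ) ≤ C * x) :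
    ∀ᶠ x : ℝ in atTop, ((D x / (⌊x / Real.log x ^ 2⌋₊ + 1) + 1 : ℕ) : ℝ) ≤
      (C + 1) * Real.log x ^ (2 : ℝ) := by
  filter_upwards [hD, eventually_gt_atTop 1, Real.tendsto_log_atTop.eventually_ge_atTop 1]
    with x hDx hx hlog
  have : 0 < x := one_pos.trans hx
  have hsq : 1 ≤ Real.log x ^ 2 := one_le_pow₀ hlog
  have : 0 < x / Real.log x ^ 2 := by positivity
  have hdiv : ((D x / (⌊x / Real.log x ^ 2⌋₊ + 1) : ℕ) : ℝ) ≤ C * Real.log x ^ 2 :=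
    calc ((D x / (⌊x / Real.log x ^ 2⌋₊ + 1) : ℕ) : ℝ)
        ≤ D x / ((⌊x / Real.log x ^ 2⌋₊ + 1 : ℕ) : ℝ) := Nat.cast_div_le
      _ ≤ D x / (x / Real.log x ^ 2) := by
          gcongr
          push_cast
          exact (Nat.lt_floor_add_one _).le
      _ ≤ C * x / (x / Real.log x ^ 2) := by gcongr
      _ = C * Real.log x ^ 2 := by field_simp
  rw [Real.rpow_two]
  push_cast
  linarith

end MeshAsymptotics

section TruncatedPartialSums

variable {Ω : Type*} [MeasurableSpace Ω] {P : Measure Ω} [IsProbabilityMeasure P] {K : ℝ≥0}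
  {X : ℕ → Ω → ℝ} {σ v θ β c ε : ℝ}

theorem UpperEND.ae_eventually_sum_range_min_lt (h : UpperEND P K X) (hX : ∀ i, MemLp (X i) 2 P)
    (hmean : ∀ i, ∫ ω, X i ω ∂P = 0) (hvar : ∀ i, Var[X i; P] ≤ σ ^ 2) (hσv : σ ^ 2 < v)
    (hθ : 1 < θ) (hβ : β < 1 / 2) (hc : 0 < c) (hvc : v < c ^ 2) :
    ∀ᵐ ω ∂P, ∀ᶠ k : ℕ in atTop,
      ∑ i ∈ Finset.range ⌊θ ^ k⌋₊, min (X i ω) ((θ ^ k) ^ β) < c * lilScale (θ ^ k) := by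
  have hv : 0 < v := (sq_nonneg σ).trans_lt hσv
  simpa only [Finset.mem_singleton, forall_eq] using
    h.ae_eventually_sum_min_lt_of_card_le_log_rpow hX hmean hvar hσv hθ hβ hc one_pos
      (F := fun k => {Finset.range ⌊θ ^ k⌋₊}) (r := 0) (A := 1)
      (Eventually.of_forall fun k s hs => by
        rw [Finset.mem_singleton.1 hs, Finset.card_range, one_mul]
        exact Nat.floor_le (by positivity))
      (by rwa [zero_add, one_mul, one_lt_div hv]) (by simp)

theorem UpperEND.ae_eventually_forall_meshBlocks_sum_min_lt (h : UpperEND P K X)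
    (hX : ∀ i, MemLp (X i) 2 P) (hmean : ∀ i, ∫ ω, X i ω ∂P = 0)
    (hvar : ∀ i, Var[X i; P] ≤ σ ^ 2) (hσv : σ ^ 2 < v) (hθ : 1 < θ) (hβ : β < 1 / 2)
    (hε : 0 < ε) (hθε : 3 * (2 * (θ - 1) * v) < ε ^ 2) :
    ∀ᵐ ω ∂P, ∀ᶠ k : ℕ in atTop, ∀ s ∈ meshBlocks ⌊θ ^ k⌋₊ (⌊θ * θ ^ k⌋₊ - ⌊θ ^ k⌋₊)
      (⌊θ ^ k / Real.log (θ ^ k) ^ 2⌋₊ + 1),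
      ∑ i ∈ s, min (X i ω) ((θ ^ k) ^ β) < ε * lilScale (θ ^ k) := by
  have hv : 0 < v := (sq_nonneg σ).trans_lt hσv
  have hη : 0 < 2 * (θ - 1) := by linarith
  have hpow := tendsto_pow_atTop_atTop_of_one_lt hθ
  have hlength := eventually_natFloor_mul_sub_natFloor_le hθ
  refine h.ae_eventually_sum_min_lt_of_card_le_log_rpow hX hmean hvar hσv hθ hβ hε hη
    (r := 2) ?_ ?_ ?_ (A := 2 * (θ - 1) + 1)
  · filter_upwards [hpow.eventually hlength] with k hk s hs
    exact (Nat.cast_le.2 (card_le_of_mem_meshBlocks hs)).trans hk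
  · rw [lt_div_iff₀ (mul_pos hη hv)]
    linarith
  · filter_upwards [hpow.eventually (eventually_natDiv_add_one_le_log_sq hlength)] with k hk
    exact (Nat.cast_le.2 card_meshBlocks_le).trans hk

theorem UpperEND.ae_eventually_forall_remainderBlocks_sum_min_lt (h : UpperEND P K X)
    (hX : ∀ i, MemLp (X i) 2 P) (hmean : ∀ i, ∫ ω, X i ω ∂P = 0)
    (hvar : ∀ i, Var[X i; P] ≤ σ ^ 2) (hθ : 1 < θ) (hβ : β < 1 / 2) (hε : 0 < ε) :
    ∀ᵐ ω ∂P, ∀ᶠ k : ℕ in atTop, ∀ s ∈ remainderBlocks ⌊θ ^ k⌋₊ (⌊θ * θ ^ k⌋₊ - ⌊θ ^ k⌋₊)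
      (⌊θ ^ k / Real.log (θ ^ k) ^ 2⌋₊ + 1),
      ∑ i ∈ s, min (X i ω) ((θ ^ k) ^ β) < ε * lilScale (θ ^ k) := by
  have hpow := tendsto_pow_atTop_atTop_of_one_lt hθ
  refine h.ae_eventually_sum_min_lt_of_card_le_pow hX hmean hvar hθ hβ hε
    (A := 2 * (θ - 1) + 1) (Eventually.of_forall fun k s hs => ?_) ?_
  · exact (Nat.le_floor_iff (by positivity)).1
      (Nat.le_of_lt_succ (card_lt_of_mem_remainderBlocks (Nat.succ_pos _) hs))
  · filter_upwards [hpow.eventually (eventually_natFloor_mul_sub_natFloor_le hθ),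
      hpow.eventually_ge_atTop 1] with k hk hk1
    refine (Nat.cast_le.2 card_remainderBlocks_le).trans ?_
    push_cast
    linarith

theorem UpperEND.ae_eventually_forall_sum_range_min_lt (h : UpperEND P K X)
    (hX : ∀ i, MemLp (X i) 2 P) (hmean : ∀ i, ∫ ω, X i ω ∂P = 0)
    (hvar : ∀ i, Var[X i; P] ≤ σ ^ 2) (hσv : σ ^ 2 < v) (hθ : 1 < θ) (hβ : β < 1 / 2)
    (hc : 0 < c) (hvc : v < c ^ 2) (hε : 0 < ε) (hθε : 3 * (2 * (θ - 1) * v) < ε ^ 2) :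
    ∀ᵐ ω ∂P, ∀ᶠ k : ℕ in atTop, ∀ n : ℕ, θ ^ k ≤ n → n ≤ θ ^ (k + 1) →
      ∑ i ∈ Finset.range n, min (X i ω) ((θ ^ k) ^ β) < (c + 2 * ε) * lilScale (θ ^ k) := by
  filter_upwards [h.ae_eventually_sum_range_min_lt hX hmean hvar hσv hθ hβ hc hvc,
    h.ae_eventually_forall_meshBlocks_sum_min_lt hX hmean hvar hσv hθ hβ hε hθε,
    h.ae_eventually_forall_remainderBlocks_sum_min_lt hX hmean hvar hθ hβ hε] with ω h₁ h₂ h₃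
  filter_upwards [h₁, h₂, h₃] with k hinitial hmesh hremainder n hkn hnk
  have hn : n ≤ ⌊θ ^ k⌋₊ + (⌊θ * θ ^ k⌋₊ - ⌊θ ^ k⌋₊) := by
    rw [pow_succ'] at hnk
    exact (Nat.le_floor hnk).trans le_add_tsub
  obtain ⟨s, hs, t, ht, hsum⟩ := exists_sum_range_eq_add_add
    (h := ⌊θ ^ k / Real.log (θ ^ k) ^ 2⌋₊ + 1) (Nat.floor_le_of_le hkn) hn
  rw [hsum]
  linarith [hmesh s hs, hremainder t ht]

end TruncatedPartialSums

section MomentTruncation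

variable {Ω : Type*} [MeasurableSpace Ω] {P : Measure Ω} {p M : ℝ≥0}

theorem measureReal_lt_le_div_rpow {X : Ω → ℝ} (hX : AEStronglyMeasurable X P) (hp : p ≠ 0)
    (hM : eLpNorm X p P ≤ M) {b : ℝ} (hb : 0 < b) :
    P.real {ω | b < X ω} ≤ (M : ℝ) ^ (p : ℝ) / b ^ (p : ℝ) := by
  lift b to ℝ≥0 using hb.le
  have hsub : {ω | (b : ℝ) < X ω} ⊆ {ω | (b : ℝ≥0∞) ≤ ‖X ω‖ₑ} := fun ω hω => by
    rw [Set.mem_ofPred_eq, ← ofReal_norm, ← ENNReal.ofReal_coe_nnreal]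
    exact ENNReal.ofReal_le_ofReal (hω.le.trans (le_abs_self _))
  have hmarkov : (b : ℝ≥0∞) ^ (p : ℝ) * P {ω | (b : ℝ) < X ω} ≤ (M : ℝ≥0∞) ^ (p : ℝ) := by
    refine (mul_le_mul_right (measure_mono hsub) _).trans ?_
    refine (mul_meas_ge_le_pow_eLpNorm' P (by simpa using hp) ENNReal.coe_ne_top hX b).trans ?_
    exact ENNReal.rpow_le_rpow hM p.coe_nonneg
  rw [le_div_iff₀' (Real.rpow_pos_of_pos hb _)]
  simpa [measureReal_def, ← ENNReal.toReal_rpow] using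
    ENNReal.toReal_mono (ENNReal.rpow_ne_top_of_nonneg p.coe_nonneg ENNReal.coe_ne_top) hmarkov

theorem ae_eventually_forall_le_rpow [IsFiniteMeasure P] {X : ℕ → Ω → ℝ} {θ β : ℝ}
    (hX : ∀ i, AEStronglyMeasurable (X i) P) (hM : ∀ i, eLpNorm (X i) p P ≤ M) (hθ : 1 < θ)
    (hβ : 1 < β * p) :
    ∀ᵐ ω ∂P, ∀ᶠ k : ℕ in atTop, ∀ i ∈ Finset.range ⌊θ ^ (k + 1)⌋₊, X i ω ≤ (θ ^ k) ^ β := by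
  have hp : p ≠ 0 := by
    rintro rfl
    norm_num at hβ
  have hθ0 : 0 < θ := one_pos.trans hθ
  have hθk : ∀ k : ℕ, 0 < θ ^ k := fun k => pow_pos hθ0 k
  suffices ∀ᵐ ω ∂P, ∀ᶠ k : ℕ in atTop, ∀ i ∈ Finset.range ⌊θ ^ (k + 1)⌋₊,
      ω ∉ {ω | (θ ^ k) ^ β < X i ω} by
    simpa only [Set.mem_ofPred_eq, not_lt] using this
  have hsummable : Summable fun k : ℕ => θ * (M : ℝ) ^ (p : ℝ) * (θ ^ (1 - β * p)) ^ k :=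
    (summable_geometric_of_lt_one (Real.rpow_nonneg hθ0.le _)
      (Real.rpow_lt_one_of_one_lt_of_neg hθ (by linarith))).mul_left _
  refine ae_eventually_forall_mem_notMem hsummable
    (Eventually.of_forall fun k i _ =>
      measureReal_lt_le_div_rpow (hX i) hp (hM i) (Real.rpow_pos_of_pos (hθk k) β))
    (Eventually.of_forall fun k => ?_)
  calc ((Finset.range ⌊θ ^ (k + 1)⌋₊).card : ℝ) * ((M : ℝ) ^ (p : ℝ) / ((θ ^ k) ^ β) ^ (p : ℝ))
      ≤ θ ^ (k + 1) * ((M : ℝ) ^ (p : ℝ) / ((θ ^ k) ^ β) ^ (p : ℝ)) := by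
        rw [Finset.card_range]
        gcongr
        exact Nat.floor_le (by positivity)
    _ = θ * (M : ℝ) ^ (p : ℝ) * (θ ^ (1 - β * p)) ^ k := by
        rw [← Real.rpow_mul (hθk k).le, ← Real.rpow_mul_natCast hθ0.le, mul_comm _ (k : ℝ),
          Real.rpow_natCast_mul hθ0.le, Real.rpow_sub (hθk k), Real.rpow_one, pow_succ']
        ring

end MomentTruncation

theorem eventually_exists_pow_le_and_le_pow_succ {θ : ℝ} (hθ : 1 < θ) {q : ℕ → Prop}
    (hq : ∀ᶠ k in atTop, q k) :
    ∀ᶠ n : ℕ in atTop, ∃ k, q k ∧ θ ^ k ≤ n ∧ n ≤ θ ^ (k + 1) := by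
  obtain ⟨k₀, hk₀⟩ := eventually_atTop.1 hq
  filter_upwards [tendsto_natCast_atTop_atTop.eventually_ge_atTop (θ ^ k₀),
    eventually_ge_atTop 1] with n hn hn1
  obtain ⟨k, hkn, hnk⟩ := exists_nat_pow_near (Nat.one_le_cast.2 hn1) hθ
  have hk : k₀ < k + 1 := (pow_lt_pow_iff_right₀ hθ).1 (hn.trans_lt hnk)
  exact ⟨k, hk₀ k (Nat.le_of_lt_succ hk), hkn, hnk.le⟩

theorem eLpNorm_sub_integral_le {Ω : Type*} [MeasurableSpace Ω] {P : Measure Ω}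
    [IsProbabilityMeasure P] {X : Ω → ℝ} {p : ℝ≥0∞} (hp : 1 ≤ p) (hX : AEStronglyMeasurable X P) :
    eLpNorm (fun ω => X ω - ∫ ω', X ω' ∂P) p P ≤ 2 * eLpNorm X p P := by
  have hmean : eLpNorm (fun _ : Ω => ∫ ω', X ω' ∂P) p P ≤ eLpNorm X p P := by
    rw [eLpNorm_const _ (one_pos.trans_le hp).ne' (IsProbabilityMeasure.ne_zero P), measure_univ,
      ENNReal.one_rpow, mul_one]
    calc ‖∫ ω', X ω' ∂P‖ₑ ≤ ∫⁻ ω', ‖X ω'‖ₑ ∂P := enorm_integral_le_lintegral_enorm X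
      _ = eLpNorm X 1 P := eLpNorm_one_eq_lintegral_enorm.symm
      _ ≤ eLpNorm X p P := eLpNorm_le_eLpNorm_of_exponent_le hp hX
  calc eLpNorm (fun ω => X ω - ∫ ω', X ω' ∂P) p P
      ≤ eLpNorm X p P + eLpNorm (fun _ : Ω => ∫ ω', X ω' ∂P) p P :=
        eLpNorm_sub_le hX aestronglyMeasurable_const hp
    _ ≤ 2 * eLpNorm X p P := by
        rw [two_mul]
        gcongr

section OneSided

variable {Ω : Type*} [MeasurableSpace Ω] {P : Measure Ω} [IsProbabilityMeasure P] {K p M : ℝ≥0}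
  {X : ℕ → Ω → ℝ} {σ v θ β c ε : ℝ}

theorem UpperEND.ae_eventually_sum_range_le_add_mul_lilA (h : UpperEND P K X) (hp : 2 ≤ p)
    (hX : ∀ i, MemLp (X i) p P) (hM : ∀ i, eLpNorm (X i) p P ≤ M)
    (hmean : ∀ i, ∫ ω, X i ω ∂P = 0) (hvar : ∀ i, Var[X i; P] ≤ σ ^ 2) (hσv : σ ^ 2 < v)
    (hθ : 1 < θ) (hβ : β < 1 / 2) (hβp : 1 < β * p) (hc : 0 < c) (hvc : v < c ^ 2) (hε : 0 < ε)
    (hθε : 3 * (2 * (θ - 1) * v) < ε ^ 2) :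
    ∀ᵐ ω ∂P, ∀ᶠ n in atTop, ∑ i ∈ Finset.range n, X i ω ≤ (c + 2 * ε) * lilA n := by
  have hX2 : ∀ i, MemLp (X i) 2 P := fun i => (hX i).mono_exponent (by exact_mod_cast hp)
  filter_upwards [h.ae_eventually_forall_sum_range_min_lt hX2 hmean hvar hσv hθ hβ hc hvc hε hθε,
    ae_eventually_forall_le_rpow (fun i => (hX i).aestronglyMeasurable) hM hθ hβp]
    with ω hsum htrunc
  filter_upwards [eventually_exists_pow_le_and_le_pow_succ hθ (hsum.and htrunc)]
    with n ⟨k, ⟨hsumk, htrunck⟩, hkn, hnk⟩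
  have hmin : ∀ i ∈ Finset.range n, min (X i ω) ((θ ^ k) ^ β) = X i ω := fun i hi =>
    min_eq_left (htrunck i (Finset.range_mono (Nat.le_floor hnk) hi))
  have hθk : 0 ≤ θ ^ k := pow_nonneg (zero_le_one.trans hθ.le) k
  calc ∑ i ∈ Finset.range n, X i ω
      ≤ (c + 2 * ε) * lilScale (θ ^ k) := by
        simpa only [Finset.sum_congr rfl hmin] using (hsumk n hkn hnk).le
    _ ≤ (c + 2 * ε) * lilA n :=
        mul_le_mul_of_nonneg_left
          (monotoneOn_lilScale hθk (Set.mem_Ici.2 n.cast_nonneg) hkn) (by positivity)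

theorem UpperEND.ae_eventually_sum_range_le_mul_lilA (h : UpperEND P K X) (hp : 2 < p)
    (hX : ∀ i, MemLp (X i) p P) (hM : ∀ i, eLpNorm (X i) p P ≤ M)
    (hmean : ∀ i, ∫ ω, X i ω ∂P = 0) (hvar : ∀ i, Var[X i; P] ≤ σ ^ 2) (hσ : 0 ≤ σ)
    (hc : σ < c) :
    ∀ᵐ ω ∂P, ∀ᶠ n in atTop, ∑ i ∈ Finset.range n, X i ω ≤ c * lilA n := by
  have hp' : (2 : ℝ) < p := by exact_mod_cast hp
  obtain ⟨β, hpβ, hβ⟩ := exists_between (one_div_lt_one_div_of_lt two_pos hp')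
  have hβp : 1 < β * p := (div_lt_iff₀ (by linarith)).1 hpβ
  obtain ⟨ε, hε, hcε⟩ : ∃ ε > 0, c = σ + 2 * ε + 2 * ε := ⟨(c - σ) / 4, by linarith, by ring⟩
  set v := (σ + ε) ^ 2
  have hv : 0 < v := by positivity
  have hσv : σ ^ 2 < v := pow_lt_pow_left₀ (lt_add_of_pos_right σ hε) hσ two_ne_zero
  have hvc : v < (σ + 2 * ε) ^ 2 := pow_lt_pow_left₀ (by linarith) (by positivity) two_ne_zero
  have hθ : 1 < 1 + ε ^ 2 / (8 * v) := lt_add_of_pos_right 1 (by positivity)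
  have hθε : 3 * (2 * (1 + ε ^ 2 / (8 * v) - 1) * v) < ε ^ 2 := by
    rw [add_sub_cancel_left]
    field_simp
    norm_num
  rw [hcε]
  exact h.ae_eventually_sum_range_le_add_mul_lilA hp.le hX hM hmean hvar hσv hθ hβ hβp
    (by positivity) hvc hε hθε

theorem UpperEND.ae_eventually_sum_sub_integral_le_mul_lilA (h : UpperEND P K X) (hp : 2 < p)
    (hX : ∀ i, MemLp (X i) p P) (hM : ∀ i, eLpNorm (X i) p P ≤ M)
    (hvar : ∀ i, Var[X i; P] ≤ σ ^ 2) (hσ : 0 ≤ σ) {c : ℝ} (hc : σ < c) :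
    ∀ᵐ ω ∂P, ∀ᶠ n in atTop,
      ∑ i ∈ Finset.range n, (X i ω - ∫ ω', X i ω' ∂P) ≤ c * lilA n := by
  have hp1 : (1 : ℝ≥0∞) ≤ p := by exact_mod_cast (one_lt_two.trans hp).le
  refine (h.add_const fun i => -∫ ω', X i ω' ∂P).ae_eventually_sum_range_le_mul_lilA (M := 2 * M)
    hp (fun i => (hX i).sub (memLp_const _)) (fun i => ?_) (fun i => ?_) (fun i => ?_) hσ hc
  · rw [ENNReal.coe_mul, ENNReal.coe_ofNat]
    exact (eLpNorm_sub_integral_le hp1 (hX i).aestronglyMeasurable).trans (by gcongr; exact hM i)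
  · simp only [← sub_eq_add_neg]
    rw [integral_sub ((hX i).integrable hp1) (integrable_const _)]
    simp
  · simp only [← sub_eq_add_neg]
    rw [variance_sub_const (hX i).aestronglyMeasurable]
    exact hvar i

end OneSided

theorem lilA_pos {n : ℕ} (hn : 0 < n) : 0 < lilA n := lilScale_pos (Nat.cast_pos.2 hn)

theorem limsup_abs_div_lilA_le {u c : ℕ → ℝ} {σ : ℝ} (hc : Tendsto c atTop (𝓝 σ))
    (h : ∀ m, ∀ᶠ n in atTop, |u n| ≤ c m * lilA n) :
    limsup (fun n => ((|u n| / lilA n : ℝ) : EReal)) atTop ≤ (σ : EReal) := by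
  refine ge_of_tendsto' ((continuous_coe_real_ereal.tendsto σ).comp hc) fun m =>
    limsup_le_of_le (by isBoundedDefault) ?_
  filter_upwards [h m, eventually_gt_atTop 0] with n hn hn0
  exact EReal.coe_le_coe_iff.2 ((div_le_iff₀ (lilA_pos hn0)).2 hn)

theorem ENDProb.ae_eventually_abs_sum_sub_integral_le_mul_lilA {Ω : Type} [MeasurableSpace Ω]
    {P : Measure Ω} [IsProbabilityMeasure P] {K : ℝ} {p M : ℝ≥0} {X : ℕ → Ω → ℝ} {σ : ℝ}
    (h : ENDProb P K X) (hp : 2 < p) (hX : ∀ i, MemLp (X i) p P) (hM : ∀ i, eLpNorm (X i) p P ≤ M)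
    (hvar : ∀ i, Var[X i; P] ≤ σ ^ 2) (hσ : 0 ≤ σ) {c : ℝ} (hc : σ < c) :
    ∀ᵐ ω ∂P, ∀ᶠ n in atTop,
      |∑ i ∈ Finset.range n, X i ω - ∑ i ∈ Finset.range n, ∫ ω', X i ω' ∂P| ≤ c * lilA n := by
  filter_upwards [h.upperEND.ae_eventually_sum_sub_integral_le_mul_lilA hp hX hM hvar hσ hc,
    h.upperEND_neg.ae_eventually_sum_sub_integral_le_mul_lilA hp (fun i => (hX i).neg)
      (fun i => (eLpNorm_neg (X i) p P).trans_le (hM i))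
      (fun i => variance_neg.trans_le (hvar i)) hσ hc] with ω hupper hlower
  filter_upwards [hupper, hlower] with n hun hln
  simp only [Pi.neg_apply, integral_neg, Finset.sum_sub_distrib, Finset.sum_neg_distrib]
    at hun hln
  exact abs_le'.2 ⟨hun, by linarith⟩

theorem memLp_toNNReal_of_integrable_abs_rpow {Ω : Type*} [MeasurableSpace Ω] {P : Measure Ω}
    {X : Ω → ℝ} {q : ℝ} (hq : 0 < q) (hX : AEMeasurable X P)
    (hint : Integrable (fun ω => |X ω| ^ q) P) : MemLp X q.toNNReal P := by
  refine (integrable_norm_rpow_iff hX.aestronglyMeasurable ?_ ENNReal.coe_ne_top).1 ?_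
  · simpa using hq
  · simpa [hq.le] using hint

theorem stmt19_general {Ω : Type} [MeasurableSpace Ω] {P : Measure Ω} [IsProbabilityMeasure P]
    {X : ℕ → Ω → ℝ} {K : ℝ} (hEND : ENDProb P K X) {p : ℝ≥0} (hp : 2 < p)
    (hX : ∀ i, AEMeasurable (X i) P) {M : ℝ≥0∞} (hMtop : M ≠ ∞) (hM : ∀ i, eLpNorm (X i) p P ≤ M)
    {V : ℝ} (hV : ∀ i, Var[X i; P] ≤ V) :
    P {ω | limsup (fun n : ℕ =>
        ((|(∑ k ∈ Finset.range n, X k ω) - ∑ k ∈ Finset.range n, ∫ ω', X k ω' ∂P| /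
            lilA n : ℝ) : EReal)) atTop ≤ (√V : EReal)} = 1 := by
  lift M to ℝ≥0 using hMtop
  have hLp : ∀ i, MemLp (X i) p P := fun i =>
    ⟨(hX i).aestronglyMeasurable, (hM i).trans_lt ENNReal.coe_lt_top⟩
  have hvar : ∀ i, Var[X i; P] ≤ √V ^ 2 := by
    rwa [Real.sq_sqrt ((variance_nonneg _ _).trans (hV 0))]
  obtain ⟨c, -, hc, hlim⟩ := exists_seq_strictAnti_tendsto √V
  have hbound := ae_all_iff.2 fun m =>
    hEND.ae_eventually_abs_sum_sub_integral_le_mul_lilA hp hLp hM hvar (Real.sqrt_nonneg V) (hc m)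
  have hlimsup := hbound.mono fun ω hω => limsup_abs_div_lilA_le hlim hω
  exact (measure_congr (eventuallyEq_univ.2 hlimsup)).trans measure_univ

/-- Corollary 5.3: law of the iterated logarithm for extended negatively
dependent, identically distributed random variables on a probability space. -/
theorem stmt19 {Ω : Type} [MeasurableSpace Ω] (P : Measure Ω)
    [IsProbabilityMeasure P] (X : ℕ → Ω → ℝ)
    (K : ℝ) (hK : 1 ≤ K)
    (hid : ∀ i, ProbabilityTheory.IdentDistrib (X i) (X 0) P P)
    (hEND : ENDProb P K X)
    (γ : ℝ) (hγ : 0 < γ)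
    (hmom : Integrable (fun ω => |X 0 ω| ^ (2 + γ)) P) :
    P {ω | limsup (fun n : ℕ =>
        ((|(∑ k ∈ Finset.range n, X k ω) - n * ∫ ω', X 0 ω' ∂P| /
            lilA n : ℝ) : EReal)) atTop ≤
      ((Real.sqrt (ProbabilityTheory.variance (X 0) P) : ℝ) : EReal)} = 1 := by
  have hX : ∀ i, AEMeasurable (X i) P := fun i => (hid i).aemeasurable_fst
  have hL := memLp_toNNReal_of_integrable_abs_rpow (by linarith) (hX 0) hmom
  have hmean : ∀ i, ∫ ω, X i ω ∂P = ∫ ω, X 0 ω ∂P := fun i => (hid i).integral_eq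
  simpa only [hmean, Finset.sum_const, Finset.card_range, nsmul_eq_mul] using
    stmt19_general hEND (Real.lt_toNNReal_iff_coe_lt.2 (lt_add_of_pos_right 2 hγ)) hX
      hL.eLpNorm_ne_top (fun i => ((hid i).eLpNorm_eq _).le) (fun i => (hid i).variance_eq.le)
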